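/- Let S = K[X_0,…,X_n] and let I ⊆ S be the ideal generated by the 2×2 minors of the 2×n matrix whose (1,j)-entry is X_{j−1} and (2,j)-entry is X_j for j = 1,…,n. If < is the lexicographic order with X_0 > X_1 > ⋯ > X_n, then in_<(I) = (X_i X_{j+1} : 0 ≤ i < j ≤ n−1); in particular in_<(I) = I_Δ where Δ is a path of length n (the graph on {0,…,n} with edges {i, i+1} for 0 ≤ i ≤ n−1). -/

import Mathlib

open MvPolynomial

/-- The leading exponent (multidegree) of a multivariate polynomial with respect to a
monomial order: the maximum of its support. (It is `0` for the zero polynomial.) -/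
noncomputable def MonomialOrder.mdeg {σ : Type*} (m : MonomialOrder σ) {R : Type*}
    [CommSemiring R] (f : MvPolynomial σ R) : σ →₀ ℕ :=
  m.toSyn.symm (f.support.sup fun e => m.toSyn e)

/-- The initial ideal of an ideal `I` with respect to a monomial order. -/
noncomputable def initialIdeal {σ : Type*} {K : Type*} [Field K] (m : MonomialOrder σ)
    (I : Ideal (MvPolynomial σ K)) : Ideal (MvPolynomial σ K) :=
  Ideal.span {g | ∃ f ∈ I, f ≠ 0 ∧ g = monomial (m.mdeg f) (1 : K)}

/-- An abstract simplicial complex on the vertex set `{0, …, n}`. -/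
structure SComplex (n : ℕ) where
  faces : Set (Finset (Fin (n + 1)))
  down_closed : ∀ {s t : Finset (Fin (n + 1))}, s ∈ faces → t ⊆ s → t ∈ faces

/-- The Stanley–Reisner ideal of a simplicial complex: generated by the squarefree monomials
`X_σ = ∏_{i ∈ σ} X_i` for the non-faces `σ` of the complex. -/
noncomputable def SComplex.srIdeal {n : ℕ} (K : Type*) [Field K] (Δ : SComplex n) :
    Ideal (MvPolynomial (Fin (n + 1)) K) :=
  Ideal.span {g | ∃ s : Finset (Fin (n + 1)), s ∉ Δ.faces ∧ g = ∏ i ∈ s, X i}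

/-- The path on `{0, …, n}` with edges `{i, i+1}`, as a simplicial complex: its faces are the
sets whose elements pairwise differ by at most one. -/
def pathComplex (n : ℕ) : SComplex n where
  faces := {s | ∀ i ∈ s, ∀ j ∈ s, (i : ℕ) ≤ (j : ℕ) + 1}
  down_closed := fun hs hts i hi j hj => hs i (hts hi) j (hts hj)

/-!
The minors vanish under the parametrisation `X_j ↦ s t^j`, which records of an exponent `a` only
the pair `(∑ a_j, ∑ j a_j)`. So the leading exponent `a` of a nonzero element of `I` shares this
pair with a lexicographically smaller exponent `b`. Let `k` be the first place where they differ,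
so `b_k < a_k`. Comparing `∑ (j - k - 1) a_j = ∑ (j - k - 1) b_j` term by term forces `a_j ≠ 0`
for some `j ≥ k + 2`, so the leading monomial is divisible by the leading term `X_k X_j` of a minor.
-/

section InitialIdeal

variable {σ K : Type*} [Field K] {m : MonomialOrder σ} {I J : Ideal (MvPolynomial σ K)}

theorem initialIdeal_le_iff :
    initialIdeal m I ≤ J ↔ ∀ f ∈ I, f ≠ 0 → monomial (m.degree f) (1 : K) ∈ J := by
  rw [initialIdeal, Ideal.span_le]
  constructor
  · exact fun h f hf hf₀ ↦ h ⟨f, hf, hf₀, rfl⟩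
  · rintro h _ ⟨f, hf, hf₀, rfl⟩
    exact h f hf hf₀

theorem monomial_degree_mem_initialIdeal {f : MvPolynomial σ K} (hf : f ∈ I) (hf₀ : f ≠ 0) :
    monomial (m.degree f) (1 : K) ∈ initialIdeal m I :=
  initialIdeal_le_iff.1 le_rfl f hf hf₀

theorem monomial_mem_initialIdeal_of_sub_mem {a b : σ →₀ ℕ} (hlt : m.toSyn b < m.toSyn a)
    (hmem : monomial a 1 - monomial b 1 ∈ I) : monomial a (1 : K) ∈ initialIdeal m I := by
  have hdeg : m.degree (monomial a (1 : K) - monomial b 1) = a := by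
    classical
    rw [MonomialOrder.degree_sub_of_lt] <;> simp [MonomialOrder.degree_monomial, hlt]
  have hne : monomial a (1 : K) - monomial b 1 ≠ 0 := by
    rw [sub_ne_zero, Ne, monomial_left_inj one_ne_zero]
    rintro rfl
    exact hlt.false
  simpa only [hdeg] using monomial_degree_mem_initialIdeal (m := m) hmem hne

end InitialIdeal

section ToricMap

variable {σ M R : Type*} [AddCommMonoid M] [CommSemiring R]

/-- The homomorphism of `R`-algebras from a polynomial ring to the monoid algebra `R[M]` that sends
the variable `X i` to the monomial with exponent `v i`. Its kernel is the toric ideal of `v`. -/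
noncomputable def toricMap (R : Type*) [CommSemiring R] (v : σ → M) :
    MvPolynomial σ R →ₐ[R] AddMonoidAlgebra R M :=
  aeval fun i ↦ AddMonoidAlgebra.single (v i) 1

theorem toricMap_monomial (v : σ → M) (a : σ →₀ ℕ) (c : R) :
    toricMap R v (monomial a c) = AddMonoidAlgebra.single (Finsupp.weight v a) c := by
  induction a using Finsupp.induction_linear generalizing c with
  | zero => simp [toricMap]
  | add a b iha ihb =>
    rw [← mul_one c, ← monomial_mul, map_mul, iha, ihb, AddMonoidAlgebra.single_mul_single, map_add]
  | single i e =>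
    simp [toricMap, aeval_monomial, AddMonoidAlgebra.single_pow, Finsupp.weight_single]

theorem coeff_toricMap [DecidableEq M] (v : σ → M) (f : MvPolynomial σ R) (d : M) :
    (toricMap R v f).coeff d = ∑ a ∈ f.support with Finsupp.weight v a = d, coeff a f := by
  conv_lhs => rw [f.as_sum]
  simp only [map_sum, toricMap_monomial, AddMonoidAlgebra.coeff_sum, AddMonoidAlgebra.coeff_single,
    Finsupp.finsetSum_apply, Finsupp.single_apply, Finset.sum_filter]

theorem X_mul_X_sub_X_mul_X_mem_ker_toricMap {R : Type*} [CommRing R] {v : σ → M} {i j k l : σ}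
    (h : v i + v j = v k + v l) :
    X i * X j - X k * X l ∈ RingHom.ker (toricMap R v) := by
  simp [toricMap, AddMonoidAlgebra.single_mul_single, h]

theorem exists_weight_eq_and_lt_degree {m : MonomialOrder σ} {v : σ → M} {f : MvPolynomial σ R}
    (hf : f ∈ RingHom.ker (toricMap R v)) (hf₀ : f ≠ 0) :
    ∃ b, Finsupp.weight v b = Finsupp.weight v (m.degree f) ∧
      m.toSyn b < m.toSyn (m.degree f) := by
  classical
  by_contra! hmin
  have hfibre : {b ∈ f.support | Finsupp.weight v b = Finsupp.weight v (m.degree f)} =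
      {m.degree f} := by
    ext b
    rw [Finset.mem_filter, Finset.mem_singleton]
    constructor
    · rintro ⟨hb, hw⟩
      exact m.toSyn.injective ((m.le_degree hb).antisymm (hmin b hw))
    · rintro rfl
      exact ⟨m.degree_mem_support hf₀, rfl⟩
  have hcoeff := coeff_toricMap v f (Finsupp.weight v (m.degree f))
  rw [RingHom.mem_ker.1 hf, hfibre, Finset.sum_singleton] at hcoeff
  exact MonomialOrder.coeff_degree_ne_zero_iff.2 hf₀ hcoeff.symm

end ToricMap

theorem toLex_lt_toLex_of_forall_le_eq_zero {σ : Type*} [LinearOrder σ] {a b : σ →₀ ℕ} {i : σ}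
    (hb : ∀ x ≤ i, b x = 0) (ha : a i ≠ 0) : toLex b < toLex a := by
  have hlt : toLex b < toLex (Finsupp.single i 1) :=
    Finsupp.Lex.lt_iff.2 ⟨i, fun x hx ↦ by simp [hb x hx.le, hx.ne'], by simp [hb i le_rfl]⟩
  exact hlt.trans_le (Finsupp.toLex_monotone (by simpa [Nat.one_le_iff_ne_zero] using ha))

theorem sum_sub_mul_eq_of_weight_eq {σ : Type*} [Fintype σ] {w : σ → ℕ} {a b : σ →₀ ℕ}
    (hw : Finsupp.weight (fun j ↦ (1, w j)) a = Finsupp.weight (fun j ↦ (1, w j)) b) (c : ℤ) :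
    ∑ j, ((w j : ℤ) - c) * a j = ∑ j, ((w j : ℤ) - c) * b j := by
  simp only [Finsupp.weight_eq_sum, Prod.ext_iff, Prod.fst_sum, Prod.snd_sum, Prod.smul_mk,
    smul_eq_mul, mul_one] at hw
  obtain ⟨hdegree, hweight⟩ := hw
  have hdegree' : ∑ j, (a j : ℤ) = ∑ j, (b j : ℤ) := mod_cast hdegree
  have hweight' : ∑ j, (w j : ℤ) * a j = ∑ j, (w j : ℤ) * b j := by
    simp only [mul_comm (w _ : ℤ)]
    exact_mod_cast hweight
  simp only [sub_mul, Finset.sum_sub_distrib, ← Finset.mul_sum, hdegree', hweight']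

/-- The exponent `(1, j)` of the monomial `s t^j` that the rational normal curve assigns to its
`j`-th coordinate. -/
def rationalNormalCurveExponent {n : ℕ} (j : Fin n) : ℕ × ℕ := (1, j)

theorem exists_succ_lt_of_weight_eq_of_toLex_lt {n : ℕ} {a b : Fin n →₀ ℕ}
    (hw : Finsupp.weight rationalNormalCurveExponent b =
      Finsupp.weight rationalNormalCurveExponent a)
    (hlt : toLex b < toLex a) :
    ∃ k j : Fin n, (k : ℕ) + 1 < j ∧ a k ≠ 0 ∧ a j ≠ 0 := by
  obtain ⟨k, hbelow, hk⟩ := Finsupp.Lex.lt_iff.1 hlt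
  simp only [ofLex_toLex] at hbelow hk
  by_contra! hsparse
  have hzero (j : Fin n) (hj : (k : ℕ) + 1 < j) : a j = 0 := hsparse k j hj (by omega)
  have hterm (j : Fin n) : ((j : ℤ) - (k + 1)) * a j ≤ ((j : ℤ) - (k + 1)) * b j := by
    obtain hjk | rfl | hkj := lt_trichotomy j k
    · rw [hbelow j hjk]
    · linarith
    · obtain hj | hj : (j : ℕ) = k + 1 ∨ (k : ℕ) + 1 < j := by omega
      · simp [hj]
      · rw [hzero j hj, Nat.cast_zero, mul_zero]
        exact mul_nonneg (by omega) (Nat.cast_nonneg _)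
  have hsum : ∑ j : Fin n, ((j : ℤ) - (k + 1)) * a j < ∑ j : Fin n, ((j : ℤ) - (k + 1)) * b j :=
    Finset.sum_lt_sum (fun j _ ↦ hterm j) ⟨k, Finset.mem_univ k, by linarith⟩
  exact hsum.ne' (sum_sub_mul_eq_of_weight_eq hw _)

section Monomials

variable {σ R : Type*} [CommSemiring R]

theorem X_mul_X_eq_monomial (i j : σ) :
    (X i * X j : MvPolynomial σ R) = monomial (Finsupp.single i 1 + Finsupp.single j 1) 1 := by
  simp [X, monomial_mul]

theorem X_mul_X_dvd_monomial {a : σ →₀ ℕ} {i j : σ}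
    (hij : i ≠ j) (hi : a i ≠ 0) (hj : a j ≠ 0) (c : R) : X i * X j ∣ monomial a c := by
  classical
  have hle : Finsupp.single i 1 + Finsupp.single j 1 ≤ a := by
    intro x
    obtain rfl | hxi := eq_or_ne x i
    · simpa [hij.symm, Nat.one_le_iff_ne_zero] using hi
    · obtain rfl | hxj := eq_or_ne x j
      · simpa [hij, Nat.one_le_iff_ne_zero] using hj
      · simp [hxi.symm, hxj.symm]
  rw [X_mul_X_eq_monomial, monomial_dvd_monomial]
  exact ⟨.inr hle, one_dvd c⟩

end Monomials

section RationalNormalCurve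

variable (K : Type*) [Field K] (n : ℕ)

/-- The ideal of the rational normal curve of degree `n`, generated by the `2 × 2` minors of the
matrix with rows `(X_0, …, X_{n-1})` and `(X_1, …, X_n)`. -/
noncomputable def rationalNormalCurveIdeal : Ideal (MvPolynomial (Fin (n + 1)) K) :=
  Ideal.span {f | ∃ j k : Fin n, j < k ∧
    f = X (Fin.castSucc j) * X (Fin.succ k) - X (Fin.succ j) * X (Fin.castSucc k)}

/-- The ideal generated by the products `X_i X_j` over the non-edges `{i, j}` of the path on
`{0, …, n}`. The larger index is written as a successor, so a non-edge is a pair `i < j` in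
`Fin n`. -/
noncomputable def pathNonedgeIdeal : Ideal (MvPolynomial (Fin (n + 1)) K) :=
  Ideal.span {g | ∃ i j : Fin n, i < j ∧ g = X (Fin.castSucc i) * X (Fin.succ j)}

variable {K n}

theorem X_mul_X_mem_pathNonedgeIdeal {i j : Fin (n + 1)} (hij : (i : ℕ) + 1 < j) :
    X i * X j ∈ pathNonedgeIdeal K n := by
  obtain ⟨j, rfl⟩ := Fin.exists_succ_eq.2 (Fin.ne_of_val_ne (by grind) : j ≠ 0)
  obtain ⟨i, rfl⟩ := Fin.exists_castSucc_eq.2 (Fin.ne_of_val_ne (by grind) : i ≠ Fin.last n)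
  exact Ideal.subset_span ⟨i, j, by simpa using hij, rfl⟩

theorem notMem_faces_pathComplex_iff {s : Finset (Fin (n + 1))} :
    s ∉ (pathComplex n).faces ↔ ∃ i ∈ s, ∃ j ∈ s, (i : ℕ) + 1 < j := by
  simp only [pathComplex, Set.mem_ofPred_eq]
  push Not
  grind

theorem srIdeal_pathComplex : (pathComplex n).srIdeal K = pathNonedgeIdeal K n := by
  apply le_antisymm
  · rw [SComplex.srIdeal, Ideal.span_le]
    rintro _ ⟨s, hs, rfl⟩
    obtain ⟨i, hi, j, hj, hij⟩ := notMem_faces_pathComplex_iff.1 hs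
    have hne : i ≠ j := by rintro rfl; omega
    have hdvd : X i * X j ∣ ∏ k ∈ s, (X k : MvPolynomial (Fin (n + 1)) K) := by
      rw [← Finset.prod_pair hne]
      exact Finset.prod_dvd_prod_of_subset _ _ _ (Finset.insert_subset hi (by simpa using hj))
    exact Ideal.mem_of_dvd _ hdvd (X_mul_X_mem_pathNonedgeIdeal hij)
  · rw [pathNonedgeIdeal, Ideal.span_le]
    rintro _ ⟨i, j, hij, rfl⟩
    have hne : i.castSucc ≠ j.succ := (Fin.castSucc_lt_succ_iff.2 hij.le).ne
    refine Ideal.subset_span ⟨{i.castSucc, j.succ}, ?_, (Finset.prod_pair hne).symm⟩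
    exact notMem_faces_pathComplex_iff.2 ⟨i.castSucc, by simp, j.succ, by simp, by simpa using hij⟩

theorem rationalNormalCurveIdeal_le_ker_toricMap :
    rationalNormalCurveIdeal K n ≤
      RingHom.ker (toricMap K rationalNormalCurveExponent) := by
  rw [rationalNormalCurveIdeal, Ideal.span_le]
  rintro _ ⟨j, k, -, rfl⟩
  refine X_mul_X_sub_X_mul_X_mem_ker_toricMap (Prod.ext rfl ?_)
  simp only [rationalNormalCurveExponent, Prod.snd_add, Fin.val_castSucc, Fin.val_succ]
  ring

theorem initialIdeal_rationalNormalCurveIdeal_le :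
    initialIdeal MonomialOrder.lex (rationalNormalCurveIdeal K n) ≤ pathNonedgeIdeal K n := by
  refine initialIdeal_le_iff.2 fun f hf hf₀ ↦ ?_
  obtain ⟨b, hw, hlt⟩ := exists_weight_eq_and_lt_degree (m := MonomialOrder.lex)
    (rationalNormalCurveIdeal_le_ker_toricMap hf) hf₀
  obtain ⟨k, j, hkj, hk, hj⟩ :=
    exists_succ_lt_of_weight_eq_of_toLex_lt hw (MonomialOrder.lex_lt_iff.1 hlt)
  have hne : k ≠ j := by rintro rfl; omega
  exact Ideal.mem_of_dvd _ (X_mul_X_dvd_monomial hne hk hj 1) (X_mul_X_mem_pathNonedgeIdeal hkj)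

theorem pathNonedgeIdeal_le_initialIdeal :
    pathNonedgeIdeal K n ≤ initialIdeal MonomialOrder.lex (rationalNormalCurveIdeal K n) := by
  rw [pathNonedgeIdeal, Ideal.span_le]
  rintro _ ⟨i, j, hij, rfl⟩
  rw [SetLike.mem_coe, X_mul_X_eq_monomial]
  refine monomial_mem_initialIdeal_of_sub_mem
    (b := Finsupp.single i.succ 1 + Finsupp.single j.castSucc 1) ?_ ?_
  · refine MonomialOrder.lex_lt_iff.2
      (toLex_lt_toLex_of_forall_le_eq_zero (i := i.castSucc) (fun x hx ↦ ?_) (by simp))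
    have hxi : x < i.succ := hx.trans_lt Fin.castSucc_lt_succ
    have hxj : x < j.castSucc := hx.trans_lt hij
    simp [hxi.ne', hxj.ne']
  · rw [← X_mul_X_eq_monomial, ← X_mul_X_eq_monomial]
    exact Ideal.subset_span ⟨i, j, hij, rfl⟩

end RationalNormalCurve

/-- **Statement 13.** Let `I` be the ideal of `2 × 2` minors of the matrix with rows
`(X_0, …, X_{n-1})` and `(X_1, …, X_n)` (defining the rational normal curve of degree `n`).
For the lexicographic order with `X_0 > X_1 > ⋯ > X_n`, the initial ideal of `I` is
`(X_i X_{j+1} : 0 ≤ i < j ≤ n-1)`, which is the Stanley–Reisner ideal of the path on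
`{0, …, n}`. -/
theorem initialIdeal_rationalNormalCurve {K : Type*} [Field K] {n : ℕ}
    (I : Ideal (MvPolynomial (Fin (n + 1)) K))
    (hI : I = Ideal.span {f | ∃ j k : Fin n, j < k ∧
      f = X (Fin.castSucc j) * X (Fin.succ k) - X (Fin.succ j) * X (Fin.castSucc k)}) :
    initialIdeal MonomialOrder.lex I =
        Ideal.span {g | ∃ i j : Fin n, i < j ∧
          g = X (Fin.castSucc i) * X (Fin.succ j)} ∧
      initialIdeal MonomialOrder.lex I = (pathComplex n).srIdeal K := by
  obtain rfl : I = rationalNormalCurveIdeal K n := hI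
  have hinitial : initialIdeal MonomialOrder.lex (rationalNormalCurveIdeal K n) =
      pathNonedgeIdeal K n :=
    initialIdeal_rationalNormalCurveIdeal_le.antisymm pathNonedgeIdeal_le_initialIdeal
  exact ⟨hinitial, hinitial.trans srIdeal_pathComplex.symm⟩
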